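/- Let n ≥ 8 be divisible by 4, let H be a saturated orthogonal array OA(n,n−1,2,2), and let two distinct fixed columns of H be removed. Then the sum of J₄(S)² over all unordered 4-subsets S of the remaining n−3 columns equals n²(n−4)(n−5)(n−6)/24. -/

import Mathlib

open Finset

/-!
Adjoining a column of ones to a saturated array gives a Hadamard matrix `A` of order `n`, and
deleting two columns of the array amounts to deleting a set `D` of three columns of `A`. Expanding
the squares, the sum of `J₄(S)²` becomes the sum over pairs of rows `i, k` of the fourth elementary
symmetric function of the products `A i j * A k j`, `j ∉ D`. These products square to `1`, so
Newton's identities express it through their sum alone. As the rows of `A` are orthogonal, for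
`i ≠ k` this sum is `-p`, where `p` is the sum of the three products with `j ∈ D`. Since
`p ^ 4 = 10 * p ^ 2 - 9`, what remains is a linear function of `p ^ 2`, whose sum over all pairs of
rows is known because the columns of `A` are orthogonal.
-/

section ElementarySymmetric

theorem sum_antidiagonal_filter_fst_lt {M : Type*} [AddCommMonoid M] (f : ℕ × ℕ → M) (k : ℕ) :
    ∑ a ∈ antidiagonal k with a.1 < k, f a = ∑ m ∈ range k, f (m, k - m) := by
  rw [sum_filter, Nat.sum_antidiagonal_eq_sum_range_succ_mk, sum_range_succ,
    if_neg (lt_irrefl k), add_zero]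
  exact sum_congr rfl fun m hm ↦ if_pos (mem_range.mp hm)

variable {α R : Type*} [CommRing R] (s : Finset α) {x : α → R}

theorem mul_sum_powersetCard_prod (x : α → R) (k : ℕ) :
    k * ∑ t ∈ s.powersetCard k, ∏ j ∈ t, x j =
      (-1) ^ (k + 1) * ∑ m ∈ range k,
        (-1) ^ m * (∑ t ∈ s.powersetCard m, ∏ j ∈ t, x j) * ∑ j ∈ s, x j ^ (k - m) := by
  have aeval_esymm (m : ℕ) :
      MvPolynomial.aeval (fun j : s ↦ x j) (MvPolynomial.esymm s R m) =
        ∑ t ∈ s.powersetCard m, ∏ j ∈ t, x j := by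
    rw [MvPolynomial.aeval_esymm_eq_multiset_esymm, ← Finset.esymm_map_val]
    exact congrArg (Multiset.esymm · m) (Multiset.attach_map_val' s.val x)
  have aeval_psum (m : ℕ) :
      MvPolynomial.aeval (fun j : s ↦ x j) (MvPolynomial.psum s R m) = ∑ j ∈ s, x j ^ m := by
    simpa [MvPolynomial.psum] using s.sum_coe_sort fun j ↦ x j ^ m
  simpa only [sum_antidiagonal_filter_fst_lt, map_mul, map_sum, map_natCast, map_pow, map_neg,
    map_one, aeval_esymm, aeval_psum] using
    congrArg (MvPolynomial.aeval fun j : s ↦ x j) (MvPolynomial.mul_esymm_eq_sum s R k)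

theorem twentyFour_mul_sum_powersetCard_four_prod (x : α → R) :
    24 * ∑ t ∈ s.powersetCard 4, ∏ j ∈ t, x j =
      (∑ j ∈ s, x j) ^ 4 - 6 * (∑ j ∈ s, x j) ^ 2 * ∑ j ∈ s, x j ^ 2 + 3 * (∑ j ∈ s, x j ^ 2) ^ 2
        + 8 * (∑ j ∈ s, x j) * ∑ j ∈ s, x j ^ 3 - 6 * ∑ j ∈ s, x j ^ 4 := by
  have newton₂ := mul_sum_powersetCard_prod s x 2
  have newton₃ := mul_sum_powersetCard_prod s x 3
  have newton₄ := mul_sum_powersetCard_prod s x 4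
  simp only [sum_range_succ, range_zero, sum_empty, powersetCard_zero, powersetCard_one,
    sum_singleton, sum_map, Function.Embedding.coeFn_mk, prod_empty, prod_singleton, pow_one,
    Nat.cast_ofNat, Nat.reduceSub, Nat.reduceAdd] at newton₂ newton₃ newton₄
  set p := ∑ j ∈ s, x j
  linear_combination 6 * newton₄ + 2 * p * newton₃ + (p ^ 2 - 3 * ∑ j ∈ s, x j ^ 2) * newton₂

variable {s}

theorem twentyFour_mul_sum_powersetCard_four_prod_of_sq_eq_one (hx : ∀ j ∈ s, x j ^ 2 = 1) :
    24 * ∑ t ∈ s.powersetCard 4, ∏ j ∈ t, x j =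
      (∑ j ∈ s, x j) ^ 4 - (6 * #s - 8) * (∑ j ∈ s, x j) ^ 2 + 3 * (#s : R) ^ 2 - 6 * #s := by
  have sum_sq : ∑ j ∈ s, x j ^ 2 = #s := by simp [sum_congr rfl hx]
  have sum_cube : ∑ j ∈ s, x j ^ 3 = ∑ j ∈ s, x j :=
    sum_congr rfl fun j hj ↦ by rw [pow_succ, hx j hj, one_mul]
  have sum_fourth : ∑ j ∈ s, x j ^ 4 = #s := by
    rw [← sum_sq]
    exact sum_congr rfl fun j hj ↦ by rw [pow_mul (x j) 2 2, hx j hj, one_pow]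
  rw [twentyFour_mul_sum_powersetCard_four_prod, sum_sq, sum_cube, sum_fourth]
  ring

theorem sum_pow_four_of_card_eq_three_of_sq_eq_one (hs : #s = 3) (hx : ∀ j ∈ s, x j ^ 2 = 1) :
    (∑ j ∈ s, x j) ^ 4 = 10 * (∑ j ∈ s, x j) ^ 2 - 9 := by
  classical
  obtain ⟨a, b, c, hab, hac, hbc, rfl⟩ := card_eq_three.mp hs
  have ha := hx a (by simp)
  have hb := hx b (by simp)
  have hc := hx c (by simp)
  have sq_sum : (x a + (x b + x c)) ^ 2 = 3 + 2 * (x a * x b + x a * x c + x b * x c) := by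
    linear_combination ha + hb + hc
  have sq_sum_mul : (x a * x b + x a * x c + x b * x c) ^ 2 =
      3 + 2 * (x a * x b + x a * x c + x b * x c) := by
    linear_combination (x b ^ 2 + x c ^ 2 + 2 * x b * x c) * ha +
      (1 + x c ^ 2 + 2 * x a * x c) * hb + (2 + 2 * x a * x b) * hc
  rw [sum_insert (by simp [hab, hac]), sum_pair hbc, pow_mul _ 2 2, sq_sum]
  linear_combination 4 * sq_sum_mul

end ElementarySymmetric

section JCharacteristic

variable {ι κ R : Type*} [Fintype ι] [CommSemiring R]

/-- The `J`-characteristic of a set `S` of columns: the sum over all rows of the product of the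
entries in these columns. -/
def jChar (A : Matrix ι κ R) (S : Finset κ) : R :=
  ∑ i, ∏ j ∈ S, A i j

theorem sum_jChar_sq (A : Matrix ι κ R) (F : Finset (Finset κ)) :
    ∑ S ∈ F, jChar A S ^ 2 = ∑ i, ∑ k, ∑ S ∈ F, ∏ j ∈ S, A i j * A k j := by
  simp_rw [jChar, sq, sum_mul_sum, ← prod_mul_distrib]
  rw [sum_comm]
  exact sum_congr rfl fun i _ ↦ sum_comm

theorem sum_sum_sq_sum_mul (A : Matrix ι κ R) (D : Finset κ) :
    ∑ i, ∑ k, (∑ j ∈ D, A i j * A k j) ^ 2 = ∑ j ∈ D, ∑ l ∈ D, (∑ i, A i j * A i l) ^ 2 := by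
  simp_rw [sq, sum_mul_sum]
  rw [sum_comm_cycle]
  refine sum_congr rfl fun j _ ↦ ?_
  rw [sum_comm_cycle]
  exact sum_congr rfl fun l _ ↦ sum_congr rfl fun i _ ↦ sum_congr rfl fun k _ ↦ by ring

end JCharacteristic

section Hadamard

variable {ι R : Type*} [Fintype ι] [DecidableEq ι]

section CommSemiring

variable [CommSemiring R] [StarRing R] [TrivialStar R] {A : Matrix ι ι R}

theorem sq_apply_of_isHadamard (hA : A.IsHadamard) (i j : ι) : A i j ^ 2 = 1 := by
  simpa [sq] using (Unitary.mem_iff.mp (hA.apply_mem i j)).1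

theorem sum_row_mul_row_of_isHadamard (hA : A.IsHadamard) (i k : ι) :
    ∑ j, A i j * A k j = if i = k then (Fintype.card ι : R) else 0 := by
  simpa [Matrix.mul_apply, Matrix.one_apply] using congrFun₂ hA.mul_conjTranspose i k

theorem sum_col_mul_col_of_isHadamard (hA : A.IsHadamard) (j l : ι) :
    ∑ i, A i j * A i l = if j = l then (Fintype.card ι : R) else 0 := by
  simpa [Matrix.mul_apply, Matrix.one_apply] using congrFun₂ hA.conjTranspose_mul j l

theorem sum_sum_sq_sum_mul_of_isHadamard (hA : A.IsHadamard) (D : Finset ι) :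
    ∑ i, ∑ k, (∑ j ∈ D, A i j * A k j) ^ 2 = #D * (Fintype.card ι : R) ^ 2 := by
  simp [sum_sum_sq_sum_mul, sum_col_mul_col_of_isHadamard hA, ite_pow]

end CommSemiring

section CommRing

variable [CommRing R] [StarRing R] [TrivialStar R] {A : Matrix ι ι R} {D : Finset ι}

theorem twentyFour_mul_sum_prod_row_mul_row_of_isHadamard (hA : A.IsHadamard) (hD : #D = 3)
    (i k : ι) :
    24 * ∑ S ∈ Dᶜ.powersetCard 4, ∏ j ∈ S, A i j * A k j =
      3 * ((Fintype.card ι : R) - 6) *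
          ((Fintype.card ι : R) - 2 - 2 * (∑ j ∈ D, A i j * A k j) ^ 2) +
        if i = k then
          (Fintype.card ι : R) * ((Fintype.card ι : R) - 6) *
            ((Fintype.card ι : R) ^ 2 - 12 * Fintype.card ι + 44)
        else 0 := by
  have sq_eq_one (j : ι) : (A i j * A k j) ^ 2 = 1 := by
    simp [mul_pow, sq_apply_of_isHadamard hA]
  have card_compl : (#Dᶜ : R) = Fintype.card ι - 3 := by
    simp [← card_add_card_compl D, hD]
  have sum_compl : ∑ j ∈ Dᶜ, A i j * A k j =
      (if i = k then (Fintype.card ι : R) else 0) - ∑ j ∈ D, A i j * A k j := by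
    rw [← sum_row_mul_row_of_isHadamard hA, ← sum_add_sum_compl D, add_sub_cancel_left]
  rw [twentyFour_mul_sum_powersetCard_four_prod_of_sq_eq_one fun j _ ↦ sq_eq_one j, card_compl,
    sum_compl]
  split_ifs with hik
  · have sum_eq_three : ∑ j ∈ D, A i j * A k j = 3 := by
      simp [← hik, ← sq, sq_apply_of_isHadamard hA, hD]
    rw [sum_eq_three]
    ring
  · linear_combination sum_pow_four_of_card_eq_three_of_sq_eq_one hD fun j _ ↦ sq_eq_one j

theorem twentyFour_mul_sum_jChar_sq_of_isHadamard (hA : A.IsHadamard) (hD : #D = 3) :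
    24 * ∑ S ∈ Dᶜ.powersetCard 4, jChar A S ^ 2 =
      (Fintype.card ι : R) ^ 2 * ((Fintype.card ι : R) - 4) * ((Fintype.card ι : R) - 5) *
        ((Fintype.card ι : R) - 6) := by
  simp_rw [sum_jChar_sq, mul_sum univ,
    twentyFour_mul_sum_prod_row_mul_row_of_isHadamard hA hD, sum_add_distrib, ← mul_sum,
    sum_sub_distrib, ← mul_sum, sum_sum_sq_sum_mul_of_isHadamard hA, hD]
  simp only [sum_const, card_univ, nsmul_eq_mul, Nat.cast_ofNat, sum_ite_eq, mem_univ, if_true]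
  ring

end CommRing

end Hadamard

section SaturatedArray

variable {ι κ R : Type*}

/-- The square matrix obtained from `H` by adjoining a column of ones, the intercept. Its columns
are indexed by the rows of `H` through `e`, as `Matrix.IsHadamard` requires, and `e none` is the
intercept. -/
def withIntercept [One R] (H : Matrix ι κ R) (e : Option κ ≃ ι) : Matrix ι ι R :=
  Matrix.of fun i k ↦ (e.symm k).elim 1 (H i)

@[simp]
theorem withIntercept_none [One R] (H : Matrix ι κ R) (e : Option κ ≃ ι) (i : ι) :
    withIntercept H e i (e none) = 1 := by
  simp [withIntercept]

@[simp]
theorem withIntercept_some [One R] (H : Matrix ι κ R) (e : Option κ ≃ ι) (i : ι) (j : κ) :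
    withIntercept H e i (e (some j)) = H i j := by
  simp [withIntercept]

variable [Fintype ι] [Fintype κ]

theorem sum_powersetCard_jChar_sq_withIntercept [CommSemiring R] [DecidableEq ι] [DecidableEq κ]
    (H : Matrix ι κ R) (e : Option κ ≃ ι) (E : Finset κ) (m : ℕ) :
    ∑ S ∈ (E.insertNone.map e.toEmbedding)ᶜ.powersetCard m, jChar (withIntercept H e) S ^ 2 =
      ∑ S ∈ Eᶜ.powersetCard m, jChar H S ^ 2 := by
  let col : κ ↪ ι := Function.Embedding.some.trans e.toEmbedding
  have compl_eq_map : (E.insertNone.map e.toEmbedding)ᶜ = Eᶜ.map col := by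
    ext k
    obtain ⟨_ | j, rfl⟩ := e.surjective k <;> simp [col]
  rw [compl_eq_map, powersetCard_map, sum_map]
  simp [jChar, col]

variable [CommRing R] {H : Matrix ι κ R}

/-- A saturated two-level orthogonal array of strength two, with rows indexed by `ι` and columns
by `κ`. The entries may be arbitrary square roots of `1` in `R`; when `R` is a domain, these are
only the two levels `1` and `-1`. -/
structure IsSaturatedOrthogonalArray (H : Matrix ι κ R) : Prop where
  card_rows : Fintype.card ι = Fintype.card κ + 1
  sq_apply (i : ι) (j : κ) : H i j ^ 2 = 1
  sum_col (j : κ) : ∑ i, H i j = 0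
  sum_col_mul_col {j l : κ} (hjl : j ≠ l) : ∑ i, H i j * H i l = 0

theorem isHadamard_withIntercept [DecidableEq ι] [StarRing R] [TrivialStar R]
    (hH : IsSaturatedOrthogonalArray H) (hcard : IsRegular (Fintype.card ι : R))
    (e : Option κ ≃ ι) : (withIntercept H e).IsHadamard := by
  classical
  rw [← Matrix.isHadamard_transpose_iff]
  refine .of_mul_conjTranspose (fun k i ↦ ?_) ?_ hcard
  · obtain ⟨_ | j, rfl⟩ := e.surjective k <;>
      simp [Unitary.mem_iff, ← sq, hH.sq_apply]
  · ext k l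
    obtain ⟨_ | j, rfl⟩ := e.surjective k <;> obtain ⟨_ | m, rfl⟩ := e.surjective l
    · simp [Matrix.mul_apply]
    · simp [Matrix.mul_apply, hH.sum_col]
    · simp [Matrix.mul_apply, hH.sum_col]
    · obtain rfl | hjm := eq_or_ne j m
      · simp [Matrix.mul_apply, ← sq, hH.sq_apply]
      · simp [Matrix.mul_apply, hH.sum_col_mul_col hjm, hjm]

theorem sum_J4_sq_delete_two_general [DecidableEq κ] (hH : IsSaturatedOrthogonalArray H)
    (hcard : IsRegular (Fintype.card ι : R)) {a b : κ} (hab : a ≠ b) :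
    24 * ∑ S ∈ (univ \ {a, b}).powersetCard 4, jChar H S ^ 2 =
      (Fintype.card ι : R) ^ 2 * ((Fintype.card ι : R) - 4) * ((Fintype.card ι : R) - 5) *
        ((Fintype.card ι : R) - 6) := by
  classical
  let : StarRing R := starRingOfComm
  have : TrivialStar R := ⟨fun _ ↦ rfl⟩
  let e : Option κ ≃ ι := Fintype.equivOfCardEq (by simp [hH.card_rows])
  have card_deleted : #(({a, b} : Finset κ).insertNone.map e.toEmbedding) = 3 := by
    simp [hab]
  rw [← compl_eq_univ_sdiff, ← sum_powersetCard_jChar_sq_withIntercept H e,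
    twentyFour_mul_sum_jChar_sq_of_isHadamard (isHadamard_withIntercept hH hcard e) card_deleted]

end SaturatedArray

/-- Deleting two distinct fixed columns from a saturated `OA(n, n-1, 2, 2)`,
the sum of `J₄(S)²` over all unordered 4-subsets of the remaining `n-3` columns
equals `n²(n-4)(n-5)(n-6)/24`. -/
theorem sum_J4_sq_delete_two (n : ℕ) (hn : 8 ≤ n) (h4 : 4 ∣ n)
    (H : Fin n → Fin (n - 1) → ℤ)
    (hpm : ∀ i j, H i j = 1 ∨ H i j = -1)
    (hbal : ∀ j, ∑ i : Fin n, H i j = 0)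
    (horth : ∀ j k : Fin (n - 1), j ≠ k → ∑ i : Fin n, H i j * H i k = 0)
    (a b : Fin (n - 1)) (hab : a ≠ b) :
    ∑ S ∈ ((Finset.univ : Finset (Fin (n - 1))) \ {a, b}).powersetCard 4,
        (∑ i : Fin n, ∏ j ∈ S, H i j) ^ 2
      = (n : ℤ) ^ 2 * ((n : ℤ) - 4) * ((n : ℤ) - 5) * ((n : ℤ) - 6) / 24 := by
  have hH : IsSaturatedOrthogonalArray (Matrix.of H) :=
    { card_rows := by simp only [Fintype.card_fin]; lia
      sq_apply i j := by simpa [sq, mul_self_eq_one_iff] using hpm i j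
      sum_col := hbal
      sum_col_mul_col := horth _ _ }
  have hcard : IsRegular (Fintype.card (Fin n) : ℤ) :=
    .of_ne_zero (by rw [Fintype.card_fin]; lia)
  exact Int.eq_ediv_of_mul_eq_right (by norm_num)
    (by simpa [jChar] using sum_J4_sq_delete_two_general hH hcard hab)
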